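/- Let Ω, U, λ, u be as in the setting, and let γ : [0,∞) → ℝ² be differentiable with γ′(t) = −∇u(γ(t)) and γ(t) ∈ closure(Ω) for all t ≥ 0. Then there exists z* ∈ closure(Ω) with ∇u(z*) = 0 such that γ(t) → z* as t → +∞, and γ has finite length: the integral ∫₀^∞ ‖∇u(γ(t))‖ dt is finite. -/

import Mathlib

open Metric Set Filter Topology MeasureTheory

noncomputable section

abbrev E2 := EuclideanSpace ℝ (Fin 2)

/-- The Laplacian of `u`: the sum of the two pure second partial derivatives. -/
def lap (u : E2 → ℝ) (z : E2) : ℝ :=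
  ∑ i : Fin 2, iteratedFDeriv ℝ 2 u z (fun _ => EuclideanSpace.single i 1)

/-- `f` has a power series at `z` whose first `n` terms vanish. -/
def VanishTo {E F : Type*} [NormedAddCommGroup E] [NormedSpace ℝ E] [NormedAddCommGroup F]
    [NormedSpace ℝ F] (f : E → F) (z : E) (n : ℕ) : Prop :=
  ∃ p : FormalMultilinearSeries ℝ E F, HasFPowerSeriesAt f p z ∧ ∀ k < n, p k = 0

section Vanish
variable {E F : Type*} [NormedAddCommGroup E] [NormedSpace ℝ E] [NormedAddCommGroup F]
    [NormedSpace ℝ F]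

lemma VanishTo.fderiv [CompleteSpace F] {f : E → F} {z : E} {n : ℕ} (h : VanishTo f z (n + 1)) :
    VanishTo (fderiv ℝ f) z n := by
  obtain ⟨p, ⟨r, hp⟩, hk⟩ := h
  exact ⟨p.derivSeries, ⟨r, hp.fderiv⟩, fun k hkn => p.derivSeries_eq_zero (hk _ (by omega))⟩

lemma VanishTo.isBigO {f : E → F} {z : E} {n : ℕ} (h : VanishTo f z n) :
    ∃ C > 0, ∀ᶠ y in 𝓝 (0 : E), ‖f (z + y)‖ ≤ C * ‖y‖ ^ n := by
  obtain ⟨p, hp, hk⟩ := h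
  have h1 := hp.isBigO_sub_partialSum_pow n
  have h2 : ∀ y, p.partialSum n y = 0 := by
    intro y
    refine Finset.sum_eq_zero fun k hkn => ?_
    rw [hk k (Finset.mem_range.1 hkn)]; rfl
  simp only [h2, sub_zero] at h1
  obtain ⟨C, hC, h3⟩ := h1.exists_pos
  refine ⟨C, hC, ?_⟩
  filter_upwards [h3.bound] with y hy
  simpa using hy

lemma vanishTo_sub_lead {f : E → F} {z : E} {p : FormalMultilinearSeries ℝ E F}
    (hf : HasFPowerSeriesAt f p z) (n : ℕ) (hz : ∀ k < n, ∀ y, p k (fun _ => y) = 0) :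
    VanishTo (fun y => f y - p n (fun _ => y - z)) z (n + 1) := by
  obtain ⟨r, hr⟩ := hf
  refine ⟨fun k => if k ≤ n then 0 else p k, ⟨r, ?_, hr.r_pos, ?_⟩, ?_⟩
  · refine hr.r_le.trans (FormalMultilinearSeries.radius_le_of_le fun k => ?_)
    by_cases hk : k ≤ n
    · simp only [hk, if_true]; rw [norm_zero]; exact norm_nonneg _
    · simp [hk]
  · intro y hy
    have h1 := hr.hasSum hy
    have h2 : HasSum (fun k : ℕ => if k = n then p n (fun _ => y) else 0) (p n (fun _ => y)) :=
      hasSum_ite_eq n _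
    convert! h1.sub h2 using 1
    · ext k
      rcases lt_trichotomy k n with hk | hk | hk
      · simp [hk.le, hk.ne, hz k hk]
      · subst hk; simp
      · simp [not_le.2 hk, hk.ne']
    · simp
  · intro k hk
    simp [Nat.lt_succ_iff.1 hk]

end Vanish

lemma fderiv_homog {E F : Type*} [NormedAddCommGroup E] [NormedSpace ℝ E] [NormedAddCommGroup F]
    [NormedSpace ℝ F] {P : E → F} {t c : ℝ} (hP : Differentiable ℝ P)
    (h : ∀ y, P (t • y) = c • P y) (y : E) :
    t • fderiv ℝ P (t • y) = c • fderiv ℝ P y := by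
  have h1 : HasFDerivAt (fun y => P (t • y)) ((fderiv ℝ P (t • y)).comp (t • ContinuousLinearMap.id ℝ E)) y :=
    HasFDerivAt.comp y (hP (t • y)).hasFDerivAt ((hasFDerivAt_id y).const_smul t)
  have h2 : HasFDerivAt (fun y => P (t • y)) (c • fderiv ℝ P y) y := by
    simp only [h]; exact (hP y).hasFDerivAt.const_smul c
  rw [← h1.unique h2]
  ext v; simp

lemma lap_eq (u : E2 → ℝ) (z : E2) : lap u z =
    ∑ i : Fin 2, fderiv ℝ (fderiv ℝ u) z (EuclideanSpace.single i 1) (EuclideanSpace.single i 1) := by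
  simp [lap, iteratedFDeriv_two_apply]

lemma harm_poly {P : E2 → ℝ} (hP : ContDiff ℝ 2 P) (hlap : ∀ z, lap P z = 0) {n : ℕ}
    (hn : 1 ≤ n) (hh : ∀ (t : ℝ) y, P (t • y) = t ^ n * P y) {e : E2} (he : e ≠ 0)
    (hde : fderiv ℝ P e = 0) : ∀ y, P y = 0 := by
  let ι : ℂ ≃L[ℝ] E2 := Complex.orthonormalBasisOneI.repr.toContinuousLinearEquiv
  have hι1 : ι 1 = EuclideanSpace.single 0 1 := by
    have := Complex.orthonormalBasisOneI.repr_self 0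
    simpa [ι] using this
  have hιI : ι Complex.I = EuclideanSpace.single 1 1 := by
    have := Complex.orthonormalBasisOneI.repr_self 1
    simpa [ι] using this
  set f : ℂ → ℝ := P ∘ ι with hf
  have hfd : ∀ x, InnerProductSpace.HarmonicAt f x := by
    intro x
    refine ⟨(hP.comp ι.contDiff).contDiffAt, Eventually.of_forall fun y => ?_⟩
    rw [InnerProductSpace.laplacian_eq_iteratedFDeriv_complexPlane]
    have h1 : ∀ v, iteratedFDeriv ℝ 2 f y v = iteratedFDeriv ℝ 2 P (ι y) (fun i => ι (v i)) := by
      intro v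
      have := (ι : ℂ →L[ℝ] E2).iteratedFDeriv_comp_right hP y (i := 2) le_rfl
      have h2 := congrArg (fun m => m v) this
      exact h2
    simp only [h1, Pi.zero_apply]
    have h3 := hlap (ι y)
    rw [lap, Fin.sum_univ_two] at h3
    rw [← h3]
    congr 2 <;> ext i <;> fin_cases i <;> simp [hι1, hιI]
  have hfdiff : Differentiable ℝ f := (hP.comp ι.contDiff).differentiable (by norm_num)
  let g : ℂ → ℂ := fun z ↦ fderiv ℝ f z 1 - Complex.I * fderiv ℝ f z Complex.I
  have hg : Differentiable ℂ g := fun x => HarmonicAt.differentiableAt_complex_partial (hfd x)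
  set z0 : ℂ := ι.symm e with hz0
  have hz0ne : z0 ≠ 0 := by simpa [hz0] using he
  have hfz0 : fderiv ℝ f z0 = 0 := by
    rw [hf, fderiv_comp _ ((hP.differentiable (by norm_num)) _) (ι.differentiableAt)]
    simp [hz0, hde]
  have hft : ∀ t : ℝ, t ≠ 0 → fderiv ℝ f (t • z0) = 0 := by
    intro t ht
    have := fderiv_homog (t := t) (c := t ^ n) hfdiff (by intro y; simp only [hf, Function.comp_apply, map_smul, hh, smul_eq_mul]) z0
    rw [hfz0, smul_zero] at this
    exact (smul_eq_zero.1 this).resolve_left ht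
  have hgz : EqOn g 0 univ := by
    have han : AnalyticOnNhd ℂ g univ := fun x _ => hg.analyticAt x
    refine han.eqOn_zero_of_preconnected_of_frequently_eq_zero isPreconnected_univ (mem_univ z0) ?_
    have ht : Tendsto (fun s : ℝ => (1 + s) • z0) (𝓝[≠] 0) (𝓝[≠] z0) := by
      refine tendsto_nhdsWithin_iff.2 ⟨?_, ?_⟩
      · have : Tendsto (fun s : ℝ => (1 + s) • z0) (𝓝 0) (𝓝 ((1 + (0:ℝ)) • z0)) :=
          Continuous.tendsto (by fun_prop) 0
        simp only [add_zero, one_smul] at this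
        exact this.mono_left nhdsWithin_le_nhds
      · filter_upwards [self_mem_nhdsWithin] with s hs
        simp only [mem_compl_iff, mem_singleton_iff] at hs ⊢
        intro h
        apply hs
        rw [add_smul, one_smul, add_eq_left] at h
        exact (smul_eq_zero.1 h).resolve_right hz0ne
    refine ht.frequently (Eventually.frequently ?_)
    have h1 : ∀ᶠ s in 𝓝 (0:ℝ), 1 + s ≠ 0 :=
      (Continuous.tendsto (f := fun s : ℝ => 1 + s) (by fun_prop) 0).eventually_ne (by simp)
    filter_upwards [nhdsWithin_le_nhds h1] with s hs
    simp only [g, hft _ hs]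
    simp
  have hdz : ∀ x, fderiv ℝ f x = 0 := by
    intro x
    have h := hgz (mem_univ x)
    simp only [g, Pi.zero_apply, Complex.ext_iff] at h
    simp at h
    ext v
    have hv : v = v.re • (1:ℂ) + v.im • Complex.I := by
      simp [Complex.ext_iff]
    rw [hv, map_add, map_smul, map_smul, h.1, h.2]; simp
  intro y
  have h1 := is_const_of_fderiv_eq_zero hfdiff hdz (ι.symm y) 0
  have h2 := hh 0 0
  rw [zero_pow (by omega)] at h2
  simp [hf] at h1 h2
  rw [h1, h2]

lemma loj_zero {U : Set E2} (hUo : IsOpen U) (hUconn : IsConnected U) {lam : ℝ}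
    {u : E2 → ℝ} (hu : AnalyticOnNhd ℝ u U)
    (hne : ∃ z ∈ U, u z ≠ 0)
    (heq : ∀ z ∈ U, lap u z + lam * u z = 0) {z : E2} (hz : z ∈ U) (huz : u z = 0) :
    ∃ (m : ℕ) (C : ℝ), 0 < C ∧ ∀ᶠ y in 𝓝 z, |u y - u z| ^ m ≤ C * ‖fderiv ℝ u y‖ ^ (m + 1) := by
  obtain ⟨p, hp⟩ := hu z hz
  have hex : ∃ n, ∃ y, p n (fun _ => y) ≠ 0 := by
    by_contra! hcon
    obtain ⟨w, hw, hwne⟩ := hne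
    apply hwne
    refine hu.eqOn_zero_of_preconnected_of_eventuallyEq_zero hUconn.isPreconnected hz ?_ hw
    obtain ⟨r, hr⟩ := hp
    filter_upwards [Metric.eball_mem_nhds z hr.r_pos] with y hy
    have h1 := hr.hasSum_sub hy
    simp only [hcon] at h1
    exact h1.unique hasSum_zero
  classical
  let n := Nat.find hex
  obtain ⟨y0, hy0⟩ : ∃ y, p n (fun _ => y) ≠ 0 := Nat.find_spec hex
  have hmin : ∀ k < n, ∀ y, p k (fun _ => y) = 0 := by
    intro k hk y
    have := Nat.find_min hex hk
    push Not at this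
    exact this y
  have hn : 1 ≤ n := by
    by_contra hn
    have hn0 : n = 0 := by omega
    have := hp.coeff_zero (fun _ => y0)
    rw [huz] at this
    apply hy0
    rw [hn0]; exact this
  let P : E2 → ℝ := fun y => p n (fun _ => y)
  have hPdef : ∀ y, P y = p n (fun _ => y) := fun y => rfl
  have hPc : ContDiff ℝ 3 P :=
    (p n).contDiff.comp (contDiff_pi.2 fun _ => contDiff_id)
  have hPd : Differentiable ℝ P := hPc.differentiable (by norm_num)
  have hP1 : ContDiff ℝ 2 (fderiv ℝ P) := hPc.fderiv_right (by norm_num)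
  have hPd1 : Differentiable ℝ (fderiv ℝ P) := hP1.differentiable (by norm_num)
  have hh : ∀ (t : ℝ) y, P (t • y) = t ^ n * P y := by
    intro t y
    have := (p n).map_smul_univ (fun _ => t) (fun _ => y)
    simpa [hPdef] using this
  have hh1 : ∀ (t : ℝ) y, t • fderiv ℝ P (t • y) = t ^ n • fderiv ℝ P y := fun t y =>
    fderiv_homog hPd (by simpa using hh t) y
  have hh2 : ∀ (t : ℝ), t ≠ 0 → ∀ y, t ^ 2 * lap P (t • y) = t ^ n * lap P y := by
    intro t ht y
    have h1 : ∀ y, fderiv ℝ P (t • y) = (t⁻¹ * t ^ n) • fderiv ℝ P y := by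
      intro y
      rw [mul_smul, ← hh1 t y, smul_smul, inv_mul_cancel₀ ht, one_smul]
    have h2 := fderiv_homog hPd1 h1 y
    have h3 : ∀ v, t * fderiv ℝ (fderiv ℝ P) (t • y) v v = (t⁻¹ * t ^ n) * fderiv ℝ (fderiv ℝ P) y v v := by
      intro v
      have := congrArg (fun L => L v v) h2
      simpa using this
    rw [lap_eq, lap_eq, Finset.mul_sum, Finset.mul_sum]
    refine Finset.sum_congr rfl fun i _ => ?_
    rw [pow_two, mul_assoc, h3]
    field_simp
  let h : E2 → ℝ := fun y => u y - P (y - z)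
  have hV : VanishTo h z (n + 1) := vanishTo_sub_lead hp n hmin
  obtain ⟨C0, hC0, hb0⟩ := hV.isBigO
  obtain ⟨C1, hC1, hb1⟩ := hV.fderiv.isBigO
  obtain ⟨k, hk⟩ : ∃ k, n = k + 1 := ⟨n - 1, by omega⟩
  have hV2 : VanishTo (fderiv ℝ (fderiv ℝ h)) z k := by
    have := hV.fderiv
    rw [hk] at this
    exact this.fderiv
  obtain ⟨C2, hC2, hb2⟩ := hV2.isBigO
  -- derivatives of h
  have hUn : ∀ᶠ y in 𝓝 (0 : E2), z + y ∈ U := by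
    have : Tendsto (fun y : E2 => z + y) (𝓝 0) (𝓝 (z + 0)) := Continuous.tendsto (by fun_prop) 0
    rw [add_zero] at this
    exact this (hUo.mem_nhds hz)
  have hd1 : ∀ w ∈ U, fderiv ℝ u w = fderiv ℝ h w + fderiv ℝ P (w - z) := by
    intro w hw
    have h1 : HasFDerivAt h (fderiv ℝ u w - fderiv ℝ P (w - z)) w := by
      refine (hu w hw).differentiableAt.hasFDerivAt.sub ?_
      exact (hPd (w - z)).hasFDerivAt.comp w ((hasFDerivAt_id w).sub_const z)
    rw [h1.fderiv]; abel
  have hd2 : ∀ w ∈ U, fderiv ℝ (fderiv ℝ u) w =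
      fderiv ℝ (fderiv ℝ h) w + fderiv ℝ (fderiv ℝ P) (w - z) := by
    intro w hw
    have h0 : fderiv ℝ h =ᶠ[𝓝 w] fun w => fderiv ℝ u w - fderiv ℝ P (w - z) := by
      filter_upwards [hUo.mem_nhds hw] with x hx
      rw [hd1 x hx]; abel
    have h1 : HasFDerivAt (fderiv ℝ h) (fderiv ℝ (fderiv ℝ u) w - fderiv ℝ (fderiv ℝ P) (w - z)) w := by
      refine HasFDerivAt.congr_of_eventuallyEq ?_ h0
      refine (hu w hw).fderiv.differentiableAt.hasFDerivAt.sub ?_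
      exact (hPd1 (w - z)).hasFDerivAt.comp w ((hasFDerivAt_id w).sub_const z)
    rw [h1.fderiv]; abel
  -- bound for P
  obtain ⟨B, hB, hPB⟩ : ∃ B > 0, ∀ y, |P y| ≤ B * ‖y‖ ^ n := by
    refine ⟨‖p n‖ + 1, by positivity, fun y => ?_⟩
    have := (p n).le_opNorm (fun _ => y)
    simp at this
    refine this.trans ?_
    gcongr; linarith
  have hub : ∀ᶠ y in 𝓝 (0 : E2), |u (z + y)| ≤ (C0 + B) * ‖y‖ ^ n := by
    filter_upwards [hb0, Metric.ball_mem_nhds (0:E2) one_pos] with y hy hy1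
    have h1 : u (z + y) = h (z + y) + P y := by simp [h]
    rw [h1]
    have hy1' : ‖y‖ ≤ 1 := by simpa using (mem_ball_zero_iff.1 hy1).le
    calc |h (z + y) + P y| ≤ |h (z + y)| + |P y| := abs_add_le _ _
      _ ≤ C0 * ‖y‖ ^ (n + 1) + B * ‖y‖ ^ n := add_le_add hy (hPB y)
      _ ≤ C0 * ‖y‖ ^ n + B * ‖y‖ ^ n := by
        gcongr C0 * ?_ + _
        exact pow_le_pow_of_le_one (norm_nonneg _) hy1' (by omega)
      _ = _ := by ring
  -- P harmonic
  have hlapP : ∀ y, lap P y = 0 := by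
    intro y
    have hev : ∀ᶠ w in 𝓝 (0 : E2), |lap P w| ≤ (|lam| * (C0 + B) + 2 * C2) * ‖w‖ ^ k := by
      filter_upwards [hub, hb2, hUn, Metric.ball_mem_nhds (0:E2) one_pos] with w h1 h2 h3 h4
      have h4' : ‖w‖ ≤ 1 := by simpa using (mem_ball_zero_iff.1 h4).le
      have h5 := hd2 _ h3
      have h6 := heq _ h3
      rw [add_sub_cancel_left] at h5
      rw [lap_eq, Fin.sum_univ_two] at h6
      rw [h5] at h6
      simp only [add_apply] at h6
      rw [lap_eq, Fin.sum_univ_two]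
      have h7 : ∀ i : Fin 2, |fderiv ℝ (fderiv ℝ h) (z + w) (EuclideanSpace.single i 1) (EuclideanSpace.single i 1)| ≤ C2 * ‖w‖ ^ k := by
        intro i
        have := (fderiv ℝ (fderiv ℝ h) (z + w)).le_opNorm₂ (EuclideanSpace.single i 1) (EuclideanSpace.single i 1)
        simp at this
        exact this.trans h2
      have h8 : |lam * u (z + w)| ≤ |lam| * ((C0 + B) * ‖w‖ ^ k) := by
        rw [abs_mul]
        refine mul_le_mul_of_nonneg_left (h1.trans ?_) (abs_nonneg _)
        refine mul_le_mul_of_nonneg_left ?_ (by positivity)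
        exact pow_le_pow_of_le_one (norm_nonneg _) h4' (by omega)
      have h9 := h7 0
      have h10 := h7 1
      rw [abs_le] at *
      constructor <;> nlinarith
    set D := |lam| * (C0 + B) + 2 * C2
    have htend : Tendsto (fun t : ℝ => t • y) (𝓝[>] 0) (𝓝 0) := by
      have : Tendsto (fun t : ℝ => t • y) (𝓝 0) (𝓝 ((0:ℝ) • y)) := Continuous.tendsto (by fun_prop) 0
      rw [zero_smul] at this
      exact this.mono_left nhdsWithin_le_nhds
    have hle : ∀ᶠ t in 𝓝[>] (0:ℝ), |lap P y| ≤ t * (D * ‖y‖ ^ k) := by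
      filter_upwards [htend hev, self_mem_nhdsWithin] with t h1 h2
      have ht : 0 < t := h2
      have h1' : |lap P (t • y)| ≤ D * ‖t • y‖ ^ k := h1
      have h3 := hh2 t ht.ne' y
      rw [norm_smul, Real.norm_eq_abs, abs_of_pos ht, mul_pow] at h1'
      have h4 : t ^ n * |lap P y| = t ^ 2 * |lap P (t • y)| := by
        have := congrArg abs h3
        rw [abs_mul, abs_mul, abs_of_pos (pow_pos ht 2), abs_of_pos (pow_pos ht n)] at this
        exact this.symm
      have h5 : t ^ n * |lap P y| ≤ t ^ n * (t * (D * ‖y‖ ^ k)) := by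
        rw [h4]
        calc t ^ 2 * |lap P (t • y)| ≤ t ^ 2 * (D * (t ^ k * ‖y‖ ^ k)) := by gcongr
          _ = t ^ n * (t * (D * ‖y‖ ^ k)) := by rw [hk]; ring
      exact le_of_mul_le_mul_left h5 (pow_pos ht n)
    have hlim : Tendsto (fun t : ℝ => t * (D * ‖y‖ ^ k)) (𝓝[>] 0) (𝓝 0) := by
      have : Tendsto (fun t : ℝ => t * (D * ‖y‖ ^ k)) (𝓝 0) (𝓝 ((0:ℝ) * (D * ‖y‖ ^ k))) :=
        Continuous.tendsto (by fun_prop) 0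
      rw [zero_mul] at this
      exact this.mono_left nhdsWithin_le_nhds
    have := ge_of_tendsto hlim hle
    exact abs_eq_zero.1 (le_antisymm this (abs_nonneg _))
  have hPne : ∀ e : E2, e ≠ 0 → fderiv ℝ P e ≠ 0 := fun e he hde =>
    hy0 (harm_poly (hPc.of_le (by norm_num)) hlapP hn hh he hde y0)
  -- lower bound on the sphere
  obtain ⟨c, hc, hcb⟩ : ∃ c > 0, ∀ e ∈ sphere (0:E2) 1, c ≤ ‖fderiv ℝ P e‖ := by
    have hcomp : IsCompact (sphere (0:E2) 1) := isCompact_sphere 0 1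
    have hnonempty : (sphere (0:E2) 1).Nonempty := ⟨EuclideanSpace.single 0 1, by simp⟩
    obtain ⟨e, he, hmin⟩ := hcomp.exists_isMinOn hnonempty (f := fun e => ‖fderiv ℝ P e‖)
      (hP1.continuous.norm.continuousOn)
    refine ⟨‖fderiv ℝ P e‖, norm_pos_iff.2 (hPne e ?_), fun e' he' => hmin he'⟩
    rintro rfl
    simp at he
  have hlow : ∀ y : E2, y ≠ 0 → c * ‖y‖ ^ k ≤ ‖fderiv ℝ P y‖ := by
    intro y hy
    have hypos : 0 < ‖y‖ := norm_pos_iff.2 hy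
    have h1 := hh1 ‖y‖ (‖y‖⁻¹ • y)
    rw [smul_smul, mul_inv_cancel₀ hypos.ne', one_smul] at h1
    have h2 := congrArg norm h1
    rw [norm_smul, norm_smul, norm_norm, norm_pow, norm_norm, hk, pow_succ'] at h2
    have h3 := hcb (‖y‖⁻¹ • y) (by simp [norm_smul, hypos.ne'])
    have h4 : ‖fderiv ℝ P y‖ = ‖y‖ ^ k * ‖fderiv ℝ P (‖y‖⁻¹ • y)‖ := by
      apply mul_left_cancel₀ hypos.ne'
      rw [h2]; ring
    rw [h4, mul_comm]
    gcongr
  have hlowu : ∀ᶠ y in 𝓝 (0 : E2), y ≠ 0 → c / 2 * ‖y‖ ^ k ≤ ‖fderiv ℝ u (z + y)‖ := by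
    filter_upwards [hb1, hUn, Metric.ball_mem_nhds (0:E2) (show 0 < c / (2 * C1) by positivity)] with y h1 h2 h3 hy
    have h4 := hd1 _ h2
    rw [add_sub_cancel_left] at h4
    have h5 := hlow y hy
    have h6 : ‖fderiv ℝ P y‖ ≤ ‖fderiv ℝ u (z + y)‖ + ‖fderiv ℝ h (z + y)‖ := by
      have : fderiv ℝ P y = fderiv ℝ u (z + y) - fderiv ℝ h (z + y) := by rw [h4]; abel
      rw [this]; exact norm_sub_le _ _
    have h7 : C1 * ‖y‖ ≤ c / 2 := by
      have := (mem_ball_zero_iff.1 h3).le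
      calc C1 * ‖y‖ ≤ C1 * (c / (2 * C1)) := by gcongr
        _ = c / 2 := by field_simp
    have h8 : C1 * ‖y‖ ^ n ≤ c / 2 * ‖y‖ ^ k := by
      rw [hk, pow_succ']
      calc C1 * (‖y‖ * ‖y‖ ^ k) = (C1 * ‖y‖) * ‖y‖ ^ k := by ring
        _ ≤ _ := by gcongr
    linarith
  by_cases hk0 : fderiv ℝ u z = 0
  swap
  · refine ⟨0, 2 / ‖fderiv ℝ u z‖, by have := norm_pos_iff.2 hk0; positivity, ?_⟩
    have hpos := norm_pos_iff.2 hk0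
    have hcont : ContinuousAt (fun y => ‖fderiv ℝ u y‖) z := (hu z hz).fderiv.continuousAt.norm
    filter_upwards [hcont.eventually (lt_mem_nhds (half_lt_self hpos))] with y hy
    simp only [pow_zero, zero_add, pow_one]
    rw [div_mul_eq_mul_div, le_div_iff₀ hpos]
    linarith
  refine ⟨k, (C0 + B) ^ k / (c / 2) ^ (k + 1), by positivity, ?_⟩
  have htr : Tendsto (fun w : E2 => w - z) (𝓝 z) (𝓝 0) := by
    have : Tendsto (fun w : E2 => w - z) (𝓝 z) (𝓝 (z - z)) := Continuous.tendsto (by fun_prop) z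
    rwa [sub_self] at this
  filter_upwards [htr hub, htr hlowu] with w h1 h2
  by_cases hw : w = z
  · subst hw
    have hkpos : k ≠ 0 := by
      rintro rfl
      -- then P is linear with nonzero derivative, contradiction
      have h9 := hb1.self_of_nhds
      have h10 := hd1 w hz
      have h11 : fderiv ℝ h w = 0 := by
        rw [hk] at h9; simpa using h9
      rw [hk0, h11, zero_add, sub_self] at h10
      have h12 := hh1 1 0
      have h13 : ∀ t : ℝ, t ≠ 0 → fderiv ℝ P (t • y0) = fderiv ℝ P y0 := by
        intro t ht
        have := hh1 t y0
        rw [hk, zero_add, pow_one] at this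
        exact smul_right_injective _ ht this
      have h14 : Tendsto (fun t : ℝ => fderiv ℝ P (t • y0)) (𝓝[≠] 0) (𝓝 (fderiv ℝ P 0)) := by
        have : Tendsto (fun t : ℝ => fderiv ℝ P (t • y0)) (𝓝 0) (𝓝 (fderiv ℝ P ((0:ℝ) • y0))) :=
          Continuous.tendsto (hP1.continuous.comp (by fun_prop)) 0
        rw [zero_smul] at this
        exact this.mono_left nhdsWithin_le_nhds
      have h15 : Tendsto (fun t : ℝ => fderiv ℝ P (t • y0)) (𝓝[≠] 0) (𝓝 (fderiv ℝ P y0)) := by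
        refine tendsto_const_nhds.congr' ?_
        filter_upwards [self_mem_nhdsWithin] with t ht
        exact (h13 t ht).symm
      have h16 := tendsto_nhds_unique h14 h15
      refine hPne y0 ?_ (by rw [← h16, ← h10])
      rintro rfl
      apply hy0
      have := hh 0 0
      rw [zero_pow (by omega)] at this
      simpa [hPdef] using this
    rw [sub_self, abs_zero, zero_pow hkpos]
    positivity
  · have h1' : |u (z + (w - z))| ≤ (C0 + B) * ‖w - z‖ ^ n := h1
    have h2' := h2 (sub_ne_zero.2 hw)
    rw [add_sub_cancel] at h1' h2'
    rw [huz, sub_zero]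
    calc |u w| ^ k ≤ ((C0 + B) * ‖w - z‖ ^ n) ^ k := by gcongr
      _ = (C0 + B) ^ k / (c / 2) ^ (k + 1) * (c / 2 * ‖w - z‖ ^ k) ^ (k + 1) := by
        rw [hk, mul_pow, mul_pow]; field_simp; ring
      _ ≤ _ := by gcongr

lemma loj_one {h : ℝ → ℝ} {a : ℝ} (ha : AnalyticAt ℝ h a) (hda : deriv h a = 0) :
    ∃ (m : ℕ) (C : ℝ), 1 ≤ m ∧ 0 < C ∧ ∀ᶠ x in 𝓝 a, |h x - h a| ^ m ≤ C * |deriv h x| ^ (m + 1) := by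
  have hdan := ha.deriv
  have hdiff : ∀ᶠ x in 𝓝 a, DifferentiableAt ℝ h x := by
    filter_upwards [ha.eventually_analyticAt] with x hx using hx.differentiableAt
  by_cases hz : ∀ᶠ x in 𝓝 a, deriv h x = 0
  · refine ⟨1, 1, le_rfl, one_pos, ?_⟩
    obtain ⟨r, hr, hball⟩ := Metric.eventually_nhds_iff_ball.1 (hz.and hdiff)
    filter_upwards [Metric.ball_mem_nhds a hr] with x hx
    have := (convex_ball a r).norm_image_sub_le_of_norm_deriv_le (f := h) (C := 0)
      (fun y hy => (hball y hy).2) (fun y hy => by rw [(hball y hy).1, norm_zero])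
      (mem_ball_self hr) hx
    rw [zero_mul] at this
    have h2 : h x - h a = 0 := norm_le_zero_iff.1 this
    rw [h2]; simp; positivity
  · have := (hdan.exists_eventuallyEq_pow_smul_nonzero_iff).2 hz
    obtain ⟨m, q, hq, hqa, heq⟩ := this
    have hm : 1 ≤ m := by
      by_contra hm
      have hm0 : m = 0 := by omega
      have := heq.self_of_nhds
      rw [hm0] at this
      simp [hda] at this
      exact hqa this.symm
    have hpos : 0 < |q a| := abs_pos.2 hqa
    have hqc : ContinuousAt (fun x => |q x|) a := hq.continuousAt.abs
    have h1 : ∀ᶠ x in 𝓝 a, |q a| / 2 < |q x| := hqc.eventually (lt_mem_nhds (half_lt_self hpos))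
    have h2 : ∀ᶠ x in 𝓝 a, |q x| < 2 * |q a| := hqc.eventually (gt_mem_nhds (by linarith))
    obtain ⟨r, hr, hball⟩ := Metric.eventually_nhds_iff_ball.1 (heq.and (hdiff.and (h1.and h2)))
    refine ⟨m, (2 * |q a|) ^ m / (|q a| / 2) ^ (m + 1), hm, by positivity, ?_⟩
    filter_upwards [Metric.ball_mem_nhds a hr] with x hx
    have hxr : |x - a| < r := by simpa [Real.dist_eq] using hx
    have hup : |h x - h a| ≤ (2 * |q a| * |x - a| ^ m) * |x - a| := by
      have := (convex_closedBall a |x - a|).norm_image_sub_le_of_norm_deriv_le (f := h)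
        (C := 2 * |q a| * |x - a| ^ m)
        (fun y hy => (hball y (closedBall_subset_ball hxr hy)).2.1) (fun y hy => ?_)
        (mem_closedBall_self (abs_nonneg _)) (show x ∈ closedBall a |x - a| by simp [Real.dist_eq])
      · simpa using this
      · have hb := hball y (closedBall_subset_ball hxr hy)
        have hya : |y - a| ≤ |x - a| := by simpa [Real.dist_eq] using hy
        rw [hb.1, smul_eq_mul, Real.norm_eq_abs, abs_mul, abs_pow, mul_comm]
        have := hb.2.2.2.le
        gcongr
    have hb := hball x hx
    have hlow : |q a| / 2 * |x - a| ^ m ≤ |deriv h x| := by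
      rw [hb.1, smul_eq_mul, abs_mul, abs_pow, mul_comm]
      have := hb.2.2.1.le
      gcongr
    calc |h x - h a| ^ m ≤ ((2 * |q a| * |x - a| ^ m) * |x - a|) ^ m := by gcongr
      _ = (2 * |q a|) ^ m / (|q a| / 2) ^ (m + 1) * (|q a| / 2 * |x - a| ^ m) ^ (m + 1) := by
        rw [mul_pow, mul_pow, mul_pow]; field_simp; ring
      _ ≤ _ := by gcongr

lemma e2_decomp {i j : Fin 2} (hij : i ≠ j) (v : E2) (hv : v j = 0) :
    v = v i • EuclideanSpace.single i (1:ℝ) := by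
  ext k
  by_cases hk : k = i
  · subst hk; simp
  · have : k = j := by omega
    subst this; simp [hk, hv]

lemma loj_nondeg {u : E2 → ℝ} {z : E2} (hu : AnalyticAt ℝ u z) (hcrit : fderiv ℝ u z = 0)
    {i j : Fin 2} (hij : i ≠ j)
    (hii : fderiv ℝ (fderiv ℝ u) z (EuclideanSpace.single i 1) (EuclideanSpace.single i 1) ≠ 0) :
    ∃ (m : ℕ) (C : ℝ), 0 < C ∧ ∀ᶠ y in 𝓝 z, |u y - u z| ^ m ≤ C * ‖fderiv ℝ u y‖ ^ (m + 1) := by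
  set e : E2 := EuclideanSpace.single i 1 with he
  have hen : ‖e‖ = 1 := by simp [he]
  let pj : E2 →L[ℝ] ℝ := EuclideanSpace.proj j
  have hpj : ∀ v, pj v = v j := fun v => rfl
  let ev : (E2 →L[ℝ] ℝ) →L[ℝ] ℝ := ContinuousLinearMap.apply ℝ ℝ e
  let Φ : E2 → ℝ × ℝ := fun w => (pj w, ev (fderiv ℝ u w))
  have hΦa : AnalyticAt ℝ Φ z := (pj.analyticAt z).prod ((ev.analyticAt _).comp hu.fderiv)
  let L : E2 →L[ℝ] ℝ × ℝ := pj.prod (ev.comp (fderiv ℝ (fderiv ℝ u) z))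
  have hΦd : HasFDerivAt Φ L z :=
    pj.hasFDerivAt.prodMk (ev.hasFDerivAt.comp z hu.fderiv.differentiableAt.hasFDerivAt)
  have hinj : Function.Injective L := by
    rw [injective_iff_map_eq_zero]
    intro v hv
    have h1 : v j = 0 := congrArg Prod.fst hv
    have h2 : fderiv ℝ (fderiv ℝ u) z v e = 0 := congrArg Prod.snd hv
    have h3 := e2_decomp hij v h1
    rw [h3, map_smul, smul_apply, smul_eq_mul] at h2
    rw [h3, (mul_eq_zero.1 h2).resolve_right hii, zero_smul]
  let Le : E2 ≃L[ℝ] ℝ × ℝ :=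
    (LinearEquiv.ofInjectiveOfFinrankEq (L : E2 →ₗ[ℝ] ℝ × ℝ) hinj (by simp)).toContinuousLinearEquiv
  have hLe : (Le : E2 →L[ℝ] ℝ × ℝ) = L := by ext v <;> rfl
  rw [← hLe] at hΦd
  have hΦc : ContDiffAt ℝ (⊤ : WithTop ℕ∞) Φ z := hΦa.contDiffAt
  have hstr : HasStrictFDerivAt Φ (Le : E2 →L[ℝ] ℝ × ℝ) z := hΦc.hasStrictFDerivAt' hΦd (by simp)
  let Ψ : ℝ × ℝ → E2 := hstr.localInverse Φ Le z
  have hΨc : ContDiffAt ℝ (⊤ : WithTop ℕ∞) Ψ (Φ z) := hΦc.to_localInverse hΦd (by simp)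
  have hΨz : Ψ (Φ z) = z := hstr.localInverse_apply_image
  have hleft : ∀ᶠ w in 𝓝 z, Ψ (Φ w) = w := hstr.eventually_left_inverse
  have hright : ∀ᶠ q in 𝓝 (Φ z), Φ (Ψ q) = q := hstr.eventually_right_inverse
  set q0 := Φ z with hq0
  have hq02 : q0.2 = 0 := by simp [hq0, Φ, ev, hcrit]
  have hΨa : AnalyticAt ℝ Ψ q0 := hΨc.analyticAt
  let v : ℝ × ℝ → ℝ := u ∘ Ψ
  have hva : AnalyticAt ℝ v q0 := AnalyticAt.comp (by rw [hΨz]; exact hu) hΨa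
  -- bounds near q0
  obtain ⟨K, s, hs, hLip⟩ : ∃ K, ∃ s ∈ 𝓝 q0, LipschitzOnWith K (fderiv ℝ v) s :=
    (hva.fderiv.contDiffAt (n := 1)).exists_lipschitzOnWith
  set M := ‖fderiv ℝ Ψ q0‖ + 1 with hM
  have hMpos : 0 < M := by positivity
  have hMb : ∀ᶠ q in 𝓝 q0, ‖fderiv ℝ Ψ q‖ < M :=
    (hΨa.fderiv.continuousAt.norm).eventually (gt_mem_nhds (by rw [hM]; linarith))
  have huΨ : ∀ᶠ q in 𝓝 q0, AnalyticAt ℝ u (Ψ q) := by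
    have : Tendsto Ψ (𝓝 q0) (𝓝 z) := by
      have := hΨa.continuousAt.tendsto
      rwa [hΨz] at this
    exact this hu.eventually_analyticAt
  have hgood : ∀ᶠ q in 𝓝 q0, (q ∈ s ∧ AnalyticAt ℝ v q) ∧
      ‖fderiv ℝ v q‖ ≤ M * ‖fderiv ℝ u (Ψ q)‖ ∧ |fderiv ℝ v q (0, 1)| ≤ M * |q.2| ∧
      fderiv ℝ u (Ψ q) e = q.2 := by
    filter_upwards [hs, hva.eventually_analyticAt, hMb, huΨ, hΨa.eventually_analyticAt, hright,
      hright.eventually_nhds] with q h1 h2 h3 h4 h5 h6 h7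
    have hchain : fderiv ℝ v q = (fderiv ℝ u (Ψ q)).comp (fderiv ℝ Ψ q) :=
      fderiv_comp q h4.differentiableAt h5.differentiableAt
    have hsec : fderiv ℝ u (Ψ q) e = q.2 := congrArg Prod.snd h6
    refine ⟨⟨h1, h2⟩, ?_, ?_, hsec⟩
    · rw [hchain, mul_comm]
      refine (ContinuousLinearMap.opNorm_comp_le _ _).trans ?_
      gcongr
    · have hj : (fderiv ℝ Ψ q (0, 1)) j = 0 := by
        have hA : HasFDerivAt (fun q => pj (Ψ q)) (pj.comp (fderiv ℝ Ψ q)) q :=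
          pj.hasFDerivAt.comp q h5.differentiableAt.hasFDerivAt
        have hB : HasFDerivAt (fun q => pj (Ψ q)) (ContinuousLinearMap.fst ℝ ℝ ℝ) q := by
          refine hasFDerivAt_fst.congr_of_eventuallyEq ?_
          filter_upwards [h7] with q' hq'
          exact congrArg Prod.fst hq'
        have := congrArg (fun T => T ((0:ℝ), (1:ℝ))) (hA.unique hB)
        simpa [hpj] using this
      have hdec := e2_decomp hij _ hj
      rw [hchain, ContinuousLinearMap.comp_apply, hdec, map_smul, ← he, hsec, smul_eq_mul, abs_mul]
      have hc : |(fderiv ℝ Ψ q (0, 1)) i| ≤ M := by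
        have h8 : ‖(fderiv ℝ Ψ q (0, 1)) i‖ ≤ ‖fderiv ℝ Ψ q (0, 1)‖ := PiLp.norm_apply_le _ i
        have h9 := (fderiv ℝ Ψ q).le_opNorm (0, 1)
        have h10 : ‖((0:ℝ), (1:ℝ))‖ = 1 := by simp [Prod.norm_def]
        rw [h10, mul_one] at h9
        exact (h8.trans h9).trans h3.le
      gcongr
  obtain ⟨r, hr, hball⟩ := Metric.eventually_nhds_iff_ball.1 hgood
  -- the one-variable function
  let h : ℝ → ℝ := fun x => v (x, 0)
  have hq0eq : q0 = (q0.1, 0) := Prod.ext rfl hq02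
  have hha : AnalyticAt ℝ h q0.1 := by
    have h1 : AnalyticAt ℝ (fun x : ℝ => (x, (0:ℝ))) q0.1 := analyticAt_id.prod analyticAt_const
    refine AnalyticAt.comp (g := v) (f := fun x : ℝ => (x, (0:ℝ))) ?_ h1
    rw [← hq0eq]; exact hva
  have hhd : ∀ x, (x, (0:ℝ)) ∈ ball q0 r → deriv h x = fderiv ℝ v (x, 0) (1, 0) := by
    intro x hx
    have h1 : HasDerivAt (fun x : ℝ => (x, (0:ℝ))) (1, 0) x := (hasDerivAt_id x).prodMk (hasDerivAt_const x 0)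
    exact ((hball _ hx).1.2.differentiableAt.hasFDerivAt.comp_hasDerivAt x h1).deriv
  have hhd0 : deriv h q0.1 = 0 := by
    rw [hhd _ (by rw [← hq0eq]; exact mem_ball_self hr), ← hq0eq]
    have := (hball q0 (mem_ball_self hr)).2.1
    rw [hΨz, hcrit, norm_zero, mul_zero] at this
    rw [norm_le_zero_iff.1 this]; rfl
  obtain ⟨m, C, hm, hC, hloj⟩ := loj_one hha hhd0
  have hvz : v q0 = u z := by simp [v, hΨz]
  have hhz : h q0.1 = u z := by rw [← hvz]; exact congrArg v hq0eq.symm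
  refine ⟨m, 2 ^ (m - 1) * (C * (M + K) ^ (m + 1) + M ^ m), by positivity, ?_⟩
  have hΦt : Tendsto Φ (𝓝 z) (𝓝 q0) := hΦa.continuousAt.tendsto
  have hΦ1 : Tendsto (fun w => (Φ w).1) (𝓝 z) (𝓝 q0.1) := (continuous_fst.tendsto q0).comp hΦt
  have hsmall : ∀ᶠ w in 𝓝 z, ‖fderiv ℝ u w‖ < 1 :=
    (hu.fderiv.continuousAt.norm).eventually (gt_mem_nhds (by simp [hcrit]))
  filter_upwards [hleft, hΦt (Metric.ball_mem_nhds q0 hr), hΦ1 hloj, hsmall] with w h1 h2 h3 h4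
  obtain ⟨x, t, hxt⟩ : ∃ x t, Φ w = (x, t) := ⟨_, _, rfl⟩
  have h3' : |h (Φ w).1 - h q0.1| ^ m ≤ C * |deriv h (Φ w).1| ^ (m + 1) := h3
  have h2' : Φ w ∈ ball q0 r := h2
  rw [hxt] at h1 h3' h2'
  simp only at h3'
  have hseg : ∀ t', |t'| ≤ |t| → (x, t') ∈ ball q0 r := by
    intro t' ht'
    rw [mem_ball, Prod.dist_eq, max_lt_iff] at h2' ⊢
    refine ⟨h2'.1, lt_of_le_of_lt ?_ h2'.2⟩
    simpa [hq02, Real.dist_eq] using ht'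
  have hx0 := hseg 0 (by simp)
  set G := ‖fderiv ℝ u w‖ with hG
  have hbt := hball _ h2'
  rw [h1] at hbt
  have htG : |t| ≤ G := by
    have := (fderiv ℝ u w).le_opNorm e
    rw [hen, mul_one, hbt.2.2.2] at this
    exact this
  have hh' : |deriv h x| ≤ (M + K) * G := by
    rw [hhd x hx0]
    have hn1 : ‖((1:ℝ), (0:ℝ))‖ = 1 := by simp [Prod.norm_def]
    have ha := (fderiv ℝ v (x, 0)).le_opNorm (1, 0)
    rw [hn1, mul_one] at ha
    have hb := hLip.norm_sub_le (hball _ hx0).1.1 hbt.1.1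
    have hc : ‖((x, (0:ℝ)) - (x, t))‖ = |t| := by simp [Prod.norm_def]
    rw [hc] at hb
    have hd : ‖fderiv ℝ v (x, 0)‖ ≤ ‖fderiv ℝ v (x, t)‖ + ‖fderiv ℝ v (x, 0) - fderiv ℝ v (x, t)‖ := by
      have := norm_add_le (fderiv ℝ v (x, t)) (fderiv ℝ v (x, 0) - fderiv ℝ v (x, t))
      rwa [add_sub_cancel] at this
    have hK : (K : ℝ) * |t| ≤ K * G := by gcongr
    calc |fderiv ℝ v (x, 0) (1, 0)| ≤ ‖fderiv ℝ v (x, 0)‖ := ha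
      _ ≤ M * G + K * G := by linarith [hbt.2.1]
      _ = _ := by ring
  have hvh : |v (x, t) - h x| ≤ M * G ^ 2 := by
    have hder : ∀ t' ∈ closedBall (0:ℝ) |t|, HasDerivWithinAt (fun t' => v (x, t'))
        (fderiv ℝ v (x, t') (0, 1)) (closedBall (0:ℝ) |t|) t' := by
      intro t' ht'
      have hb := hball _ (hseg t' (by simpa using ht'))
      have h1 : HasDerivAt (fun s : ℝ => (x, s)) (0, 1) t' := (hasDerivAt_const t' x).prodMk (hasDerivAt_id t')
      exact (hb.1.2.differentiableAt.hasFDerivAt.comp_hasDerivAt t' h1).hasDerivWithinAt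
    have := (convex_closedBall (0:ℝ) |t|).norm_image_sub_le_of_norm_hasDerivWithin_le
      (C := M * |t|) hder (fun t' ht' => ?_) (mem_closedBall_self (abs_nonneg _))
      (show t ∈ closedBall (0:ℝ) |t| by simp)
    · simp only [Real.norm_eq_abs, sub_zero] at this
      refine this.trans ?_
      calc M * |t| * |t| ≤ M * G * G := by gcongr
        _ = _ := by ring
    · have ht'' : |t'| ≤ |t| := by simpa using ht'
      have hb := (hball _ (hseg t' ht'')).2.2.1
      simp only at hb
      refine hb.trans ?_
      gcongr
  have huw : u w = v (x, t) := by simp [v, h1]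
  have hG0 : 0 ≤ G := norm_nonneg _
  calc |u w - u z| ^ m ≤ (|h x - h q0.1| + |v (x, t) - h x|) ^ m := by
        gcongr
        rw [huw, ← hhz]
        have hsplit : v (x, t) - h q0.1 = (h x - h q0.1) + (v (x, t) - h x) := by ring
        rw [hsplit]
        exact abs_add_le _ _
    _ ≤ 2 ^ (m - 1) * (|h x - h q0.1| ^ m + |v (x, t) - h x| ^ m) :=
        add_pow_le (abs_nonneg _) (abs_nonneg _) m
    _ ≤ 2 ^ (m - 1) * (C * ((M + K) * G) ^ (m + 1) + M ^ m * G ^ (m + 1)) := by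
        gcongr
        · exact h3'.trans (by gcongr)
        · calc |v (x, t) - h x| ^ m ≤ (M * G ^ 2) ^ m := by gcongr
            _ = M ^ m * G ^ (2 * m) := by rw [mul_pow, pow_mul]
            _ ≤ M ^ m * G ^ (m + 1) := by
              refine mul_le_mul_of_nonneg_left ?_ (by positivity)
              exact pow_le_pow_of_le_one hG0 h4.le (by omega)
    _ = _ := by rw [mul_pow]; ring

/-- The Łojasiewicz gradient inequality for eigenfunctions in the plane. -/
lemma loj_all {U : Set E2} (hUo : IsOpen U) (hUconn : IsConnected U) {lam : ℝ} (hlam : 0 < lam)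
    {u : E2 → ℝ} (hu : AnalyticOnNhd ℝ u U)
    (hne : ∃ z ∈ U, u z ≠ 0)
    (heq : ∀ z ∈ U, lap u z + lam * u z = 0) {z : E2} (hz : z ∈ U) :
    ∃ (m : ℕ) (C : ℝ), 0 < C ∧ ∀ᶠ y in 𝓝 z, |u y - u z| ^ m ≤ C * ‖gradient u y‖ ^ (m + 1) := by
  have hg : ∀ y, ‖gradient u y‖ = ‖fderiv ℝ u y‖ := fun y => by simp [gradient]
  simp only [hg]
  by_cases huz : u z = 0
  · exact loj_zero hUo hUconn hu hne heq hz huz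
  by_cases hk0 : fderiv ℝ u z = 0
  swap
  · refine ⟨0, 2 / ‖fderiv ℝ u z‖, by have := norm_pos_iff.2 hk0; positivity, ?_⟩
    have hpos := norm_pos_iff.2 hk0
    have hcont : ContinuousAt (fun y => ‖fderiv ℝ u y‖) z := (hu z hz).fderiv.continuousAt.norm
    filter_upwards [hcont.eventually (lt_mem_nhds (half_lt_self hpos))] with y hy
    simp only [pow_zero, zero_add, pow_one]
    rw [div_mul_eq_mul_div, le_div_iff₀ hpos]
    linarith
  by_cases h0 : fderiv ℝ (fderiv ℝ u) z (EuclideanSpace.single 0 1) (EuclideanSpace.single 0 1) = 0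
  · refine loj_nondeg (hu z hz) hk0 (i := 1) (j := 0) (by decide) fun h1 => ?_
    have := heq z hz
    rw [lap_eq, Fin.sum_univ_two, h0, h1] at this
    simp [huz, hlam.ne'] at this
  · exact loj_nondeg (hu z hz) hk0 (i := 0) (j := 1) (by decide) h0

lemma dyn_trap {γ γ' : ℝ → E2} {φ φ' : ℝ → ℝ} {T r : ℝ} {z : E2} (hr : 0 < r)
    (hγ : ∀ t ∈ Ici T, HasDerivWithinAt γ (γ' t) (Ici T) t)
    (hφ : ∀ t ∈ Ici T, HasDerivWithinAt φ (φ' t) (Ici T) t)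
    (hle : ∀ t ∈ Ici T, γ t ∈ ball z r → ‖γ' t‖ ≤ -φ' t)
    (hφ0 : Tendsto φ atTop (𝓝 0)) (hφn : ∀ t ∈ Ici T, 0 ≤ φ t)
    (hcl : MapClusterPt z atTop γ) (hc : ContinuousOn γ' (Ici T)) :
    Tendsto γ atTop (𝓝 z) ∧ IntegrableOn (fun t => ‖γ' t‖) (Ici T) := by
  have hγc : ContinuousOn γ (Ici T) := fun t ht => (hγ t ht).continuousWithinAt
  have hφc : ContinuousOn φ (Ici T) := fun t ht => (hφ t ht).continuousWithinAt
  have key : ∀ a b, T ≤ a → a ≤ b → (∀ t ∈ Ico a b, γ t ∈ ball z r) →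
      ‖γ b - γ a‖ ≤ φ a - φ b := by
    intro a b hTa hab hin
    have hsub : Icc a b ⊆ Ici T := fun t ht => hTa.trans ht.1
    refine image_norm_le_of_norm_deriv_right_le_deriv_boundary' (f := fun t => γ t - γ a)
      (f' := γ') (B := fun t => φ a - φ t) (B' := fun t => -φ' t) (a := a) (b := b)
      ((hγc.mono hsub).sub continuousOn_const) ?_ (by simp)
      (continuousOn_const.sub (hφc.mono hsub)) ?_ ?_ (right_mem_Icc.2 hab)
    · intro t ht
      exact ((hγ t (hTa.trans ht.1)).mono (Ici_subset_Ici.2 (hTa.trans ht.1))).sub_const _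
    · intro t ht
      exact ((hφ t (hTa.trans ht.1)).mono (Ici_subset_Ici.2 (hTa.trans ht.1))).const_sub _
    · intro t ht
      exact hle t (hTa.trans ht.1) (hin t ht)
  have choose_time : ∀ ε > 0, ∃ a, T ≤ a ∧ dist (γ a) z < ε ∧ φ a < ε := by
    intro ε hε
    have h1 : ∃ᶠ t in atTop, γ t ∈ ball z ε := hcl.frequently (Metric.ball_mem_nhds z hε)
    have h2 : ∀ᶠ t in atTop, φ t < ε := hφ0.eventually (gt_mem_nhds hε)
    obtain ⟨a, ha, hb, hc⟩ := (h1.and_eventually (h2.and (eventually_ge_atTop T))).exists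
    exact ⟨a, hc, ha, hb⟩
  obtain ⟨a, hTa, hda, hφa⟩ := choose_time (r / 3) (by positivity)
  have trap : ∀ t, a ≤ t → γ t ∈ ball z r := by
    by_contra! hcon
    obtain ⟨t0, ht0, ht0'⟩ := hcon
    let S := Ici a ∩ γ ⁻¹' (ball z r)ᶜ
    have hScl : IsClosed S :=
      (hγc.mono (Ici_subset_Ici.2 hTa)).preimage_isClosed_of_isClosed isClosed_Ici
        isOpen_ball.isClosed_compl
    have hSne : S.Nonempty := ⟨t0, ht0, ht0'⟩
    have hSb : BddBelow S := ⟨a, fun t ht => ht.1⟩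
    have hb := hScl.csInf_mem hSne hSb
    set b := sInf S
    have hin : ∀ t ∈ Ico a b, γ t ∈ ball z r := by
      intro t ht
      by_contra hnot
      exact absurd (csInf_le hSb (show t ∈ S from ⟨ht.1, hnot⟩)) (not_le.2 ht.2)
    have h1 := key a b hTa hb.1 hin
    have h2 := hφn b (hTa.trans hb.1)
    apply hb.2
    rw [mem_ball]
    have h3 := dist_triangle (γ b) (γ a) z
    rw [dist_eq_norm (γ b) (γ a)] at h3
    linarith
  refine ⟨?_, ?_⟩
  · rw [Metric.tendsto_atTop]
    intro ε hε
    have h1 : ∃ᶠ t in atTop, γ t ∈ ball z (ε / 2) :=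
      hcl.frequently (Metric.ball_mem_nhds z (by positivity))
    have h2 : ∀ᶠ t in atTop, φ t < ε / 2 := hφ0.eventually (gt_mem_nhds (by positivity))
    obtain ⟨b, hb1, hb2, hb3⟩ := (h1.and_eventually (h2.and (eventually_ge_atTop a))).exists
    refine ⟨b, fun t ht => ?_⟩
    have h3 := key b t (hTa.trans hb3) ht (fun x hx => trap x (hb3.trans hx.1))
    have h4 := hφn t (hTa.trans (hb3.trans ht))
    have h5 := dist_triangle (γ t) (γ b) z
    rw [dist_eq_norm (γ t) (γ b)] at h5
    rw [mem_ball] at hb1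
    linarith
  · have h1 : IntegrableOn φ' (Ioi a) := by
      refine integrableOn_Ioi_deriv_of_nonpos (g := φ) (l := 0)
        ((hφc a hTa).mono (Ici_subset_Ici.2 hTa)) ?_ ?_ hφ0
      · intro t ht
        exact (hφ t (hTa.trans (le_of_lt ht))).hasDerivAt (Ici_mem_nhds (lt_of_le_of_lt hTa ht))
      · intro t ht
        have := hle t (hTa.trans (le_of_lt ht)) (trap t (le_of_lt ht))
        linarith [norm_nonneg (γ' t)]
    have h2 : IntegrableOn (fun t => ‖γ' t‖) (Ioi a) := by
      refine Integrable.mono' h1.neg ?_ ?_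
      · refine ContinuousOn.aestronglyMeasurable ?_ measurableSet_Ioi
        exact (hc.mono fun t ht => hTa.trans (le_of_lt ht)).norm
      · refine (ae_restrict_iff' measurableSet_Ioi).2 (Eventually.of_forall fun t ht => ?_)
        rw [norm_norm]
        exact hle t (hTa.trans (le_of_lt ht)) (trap t (le_of_lt ht))
    have h3 : IntegrableOn (fun t => ‖γ' t‖) (Icc T a) :=
      (hc.norm.mono Icc_subset_Ici_self).integrableOn_compact isCompact_Icc
    rw [← Icc_union_Ioi_eq_Ici hTa]
    exact h3.union h2

lemma loj_scalar {m : ℕ} {C S G : ℝ} (hC : 0 < C) (hS : 0 < S) (hG : 0 ≤ G)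
    (h : S ^ m ≤ C * G ^ (m + 1)) :
    G ≤ -(((m + 1 : ℝ) * C ^ (1 / (m + 1 : ℝ))) *
      (-(G ^ 2) * (1 / (m + 1 : ℝ)) * S ^ (1 / (m + 1 : ℝ) - 1))) := by
  have hm : (0 : ℝ) < m + 1 := by positivity
  set ρ := 1 / (m + 1 : ℝ) with hρ
  have hρ0 : 0 < ρ := by positivity
  have hmρ : (m + 1 : ℝ) * ρ = 1 := by rw [hρ]; field_simp
  have h1 : S ^ (1 - ρ) ≤ C ^ ρ * G := by
    have e1 : S ^ (1 - ρ) = (S ^ m) ^ ρ := by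
      rw [← Real.rpow_natCast, ← Real.rpow_mul hS.le]
      congr 1; linarith
    have e2 : (G ^ (m + 1)) ^ ρ = G := by
      rw [← Real.rpow_natCast, ← Real.rpow_mul hG]
      push_cast
      rw [hmρ, Real.rpow_one]
    calc S ^ (1 - ρ) = (S ^ m) ^ ρ := e1
      _ ≤ (C * G ^ (m + 1)) ^ ρ := by gcongr
      _ = C ^ ρ * G := by rw [Real.mul_rpow hC.le (by positivity), e2]
  have h2 : S ^ (ρ - 1) * S ^ (1 - ρ) = 1 := by
    rw [← Real.rpow_add hS]; simp
  have h3 : 0 < S ^ (ρ - 1) := Real.rpow_pos_of_pos hS _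
  have h4 : 1 ≤ S ^ (ρ - 1) * (C ^ ρ * G) := by
    exact h2.symm.le.trans (mul_le_mul_of_nonneg_left h1 h3.le)
  calc G = G * 1 := by ring
    _ ≤ G * (S ^ (ρ - 1) * (C ^ ρ * G)) := by gcongr
    _ = ((m + 1 : ℝ) * ρ) * (G * (S ^ (ρ - 1) * (C ^ ρ * G))) := by rw [hmρ, one_mul]
    _ = _ := by ring

/-- A gradient-descent trajectory of the eigenfunction `u` staying in `closure Ω`
converges to a critical point of `u` and has finite length. -/
theorem trajectory_converges_finite_length
    (Ω U : Set E2) (hΩne : Ω.Nonempty) (hΩo : IsOpen Ω)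
    (hΩb : Bornology.IsBounded Ω)
    (hUo : IsOpen U) (hUconn : IsConnected U) (hsub : closure Ω ⊆ U)
    (lam : ℝ) (hlam : 0 < lam)
    (u : E2 → ℝ) (hu : AnalyticOnNhd ℝ u U)
    (hne : ∃ z ∈ U, u z ≠ 0)
    (heq : ∀ z ∈ U, lap u z + lam * u z = 0)
    (γ : ℝ → E2)
    (hderiv : ∀ t ∈ Ici (0:ℝ), HasDerivWithinAt γ (-(gradient u (γ t))) (Ici 0) t)
    (hmem : ∀ t ∈ Ici (0:ℝ), γ t ∈ closure Ω) :
    ∃ zlim ∈ closure Ω, gradient u zlim = 0 ∧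
      Tendsto γ atTop (𝓝 zlim) ∧
      IntegrableOn (fun t => ‖gradient u (γ t)‖) (Ici 0) := by
  have hK : IsCompact (closure Ω) := hΩb.isCompact_closure
  obtain ⟨z, hzK, hcl⟩ : ∃ z ∈ closure Ω, MapClusterPt z atTop γ := by
    refine hK (f := map γ atTop) ?_
    rw [le_principal_iff, mem_map]
    filter_upwards [eventually_ge_atTop (0:ℝ)] with t ht using hmem t ht
  have hzU := hsub hzK
  have hgradc : ContinuousOn (gradient u) U := by
    intro w hw
    have : ContinuousAt (gradient u) w :=
      (InnerProductSpace.toDual ℝ E2).symm.continuous.continuousAt.comp (hu w hw).fderiv.continuousAt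
    exact this.continuousWithinAt
  have hγc : ContinuousOn γ (Ici 0) := fun t ht => (hderiv t ht).continuousWithinAt
  have hgc : ContinuousOn (fun t => gradient u (γ t)) (Ici 0) :=
    hgradc.comp hγc fun t ht => hsub (hmem t ht)
  let s : ℝ → ℝ := fun t => u (γ t)
  have hs : ∀ t ∈ Ici (0:ℝ), HasDerivWithinAt s (-(‖gradient u (γ t)‖ ^ 2)) (Ici 0) t := by
    intro t ht
    have h1 := (hu _ (hsub (hmem t ht))).differentiableAt.hasGradientAt.hasFDerivAt
    have h2 := h1.comp_hasDerivWithinAt t (hderiv t ht)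
    convert! h2 using 1
    rw [InnerProductSpace.toDual_apply_apply, inner_neg_right, real_inner_self_eq_norm_sq]
  have hsc : ContinuousOn s (Ici 0) := fun t ht => (hs t ht).continuousWithinAt
  have hanti : AntitoneOn s (Ici 0) := by
    refine antitoneOn_of_hasDerivWithinAt_nonpos (convex_Ici 0) hsc
      (f' := fun t => -(‖gradient u (γ t)‖ ^ 2)) ?_ ?_
    · intro t ht
      exact (hs t (interior_subset ht)).mono interior_subset
    · intro t ht
      have := sq_nonneg ‖gradient u (γ t)‖
      linarith
  have hscl : MapClusterPt (u z) atTop s := hcl.continuousAt_comp (hu z hzU).continuousAt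
  have hsge : ∀ t ∈ Ici (0:ℝ), u z ≤ s t := by
    intro t ht
    by_contra! hlt
    have h1 := hscl.frequently (lt_mem_nhds hlt)
    obtain ⟨t', h2, h3⟩ := (h1.and_eventually (eventually_ge_atTop t)).exists
    have := hanti ht (show t' ∈ Ici (0:ℝ) from le_trans ht h3) h3
    exact absurd h2 (not_lt.2 this)
  have hst : Tendsto s atTop (𝓝 (u z)) := by
    rw [Metric.tendsto_atTop]
    intro ε hε
    have h1 := hscl.frequently (gt_mem_nhds (show u z < u z + ε by linarith))
    obtain ⟨t', h2, h3⟩ := (h1.and_eventually (eventually_ge_atTop 0)).exists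
    refine ⟨t', fun t ht => ?_⟩
    have h4 : t ∈ Ici (0:ℝ) := le_trans h3 ht
    have h5 := hanti h3 h4 ht
    have h6 := hsge t h4
    have h2' : s t' < u z + ε := h2
    rw [Real.dist_eq, abs_lt]; constructor <;> linarith
  obtain ⟨m, C, hC, hloj⟩ := loj_all hUo hUconn hlam hu hne heq hzU
  obtain ⟨r, hr, hball⟩ := Metric.eventually_nhds_iff_ball.1 hloj
  have hmain : Tendsto γ atTop (𝓝 z) ∧ IntegrableOn (fun t => ‖gradient u (γ t)‖) (Ici 0) := by
    by_cases hex : ∃ T ∈ Ici (0:ℝ), s T = u z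
    · obtain ⟨T, hT, hsT⟩ := hex
      have hT0 : 0 ≤ T := hT
      have hconst : ∀ t ∈ Ici T, s t = u z := fun t ht =>
        le_antisymm (hsT ▸ hanti hT (show t ∈ Ici (0:ℝ) from hT0.trans ht) ht) (hsge t (hT0.trans ht))
      have hg0 : ∀ t ∈ Ici T, gradient u (γ t) = 0 := by
        intro t ht
        have h1 := (hs t (hT0.trans ht)).mono (Ici_subset_Ici.2 (hT0.trans ht))
        have h2 : HasDerivWithinAt s 0 (Ici t) t :=
          (hasDerivWithinAt_const t (Ici t) (u z)).congr
            (fun x hx => hconst x (Ici_subset_Ici.2 ht hx)) (hconst t ht)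
        have h3 := (uniqueDiffWithinAt_Ici t).eq_deriv _ h1 h2
        simpa using h3
      have h := dyn_trap (γ := γ) (γ' := fun t => -(gradient u (γ t))) (φ := fun _ => 0)
        (φ' := fun _ => 0) (T := T) hr
        (fun t ht => (hderiv t (hT0.trans ht)).mono (Ici_subset_Ici.2 hT0))
        (fun t ht => hasDerivWithinAt_const _ _ _) (fun t ht _ => by simp [hg0 t ht])
        tendsto_const_nhds (fun _ _ => le_rfl) hcl (hgc.mono (Ici_subset_Ici.2 hT0)).neg
      refine ⟨h.1, ?_⟩
      have h3 : IntegrableOn (fun t => ‖gradient u (γ t)‖) (Icc 0 T) :=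
        (hgc.norm.mono Icc_subset_Ici_self).integrableOn_compact isCompact_Icc
      rw [← Icc_union_Ici_eq_Ici hT0]
      refine h3.union ?_
      simpa using h.2
    · push Not at hex
      have hpos : ∀ t ∈ Ici (0:ℝ), 0 < s t - u z := fun t ht =>
        sub_pos.2 (lt_of_le_of_ne (hsge t ht) (hex t ht).symm)
      have h := dyn_trap (γ := γ) (γ' := fun t => -(gradient u (γ t)))
        (φ := fun t => ((m + 1 : ℝ) * C ^ (1 / (m + 1 : ℝ))) * (s t - u z) ^ (1 / (m + 1 : ℝ)))
        (φ' := fun t => ((m + 1 : ℝ) * C ^ (1 / (m + 1 : ℝ))) *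
          (-(‖gradient u (γ t)‖ ^ 2) * (1 / (m + 1 : ℝ)) * (s t - u z) ^ (1 / (m + 1 : ℝ) - 1)))
        (T := 0) hr hderiv ?_ ?_ ?_ ?_ hcl hgc.neg
      · simpa using h
      · intro t ht
        exact (((hs t ht).sub_const (u z)).rpow_const (Or.inl (hpos t ht).ne')).const_mul _
      · intro t ht hb
        have h1 := hball _ hb
        have h2 : |u (γ t) - u z| = s t - u z := abs_of_pos (hpos t ht)
        rw [h2] at h1
        rw [norm_neg]
        exact loj_scalar hC (hpos t ht) (norm_nonneg _) h1
      · have h1 : Tendsto (fun t => s t - u z) atTop (𝓝 0) := by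
          have := hst.sub_const (u z); rwa [sub_self] at this
        have hρ : (0:ℝ) < 1 / (m + 1 : ℝ) := by positivity
        have h2 := (h1.rpow_const (p := 1 / (m + 1 : ℝ)) (Or.inr hρ.le)).const_mul
          ((m + 1 : ℝ) * C ^ (1 / (m + 1 : ℝ)))
        rwa [Real.zero_rpow hρ.ne', mul_zero] at h2
      · intro t ht
        have := hpos t ht
        positivity
  refine ⟨z, hzK, ?_, hmain⟩
  by_contra hgz
  have hlim : Tendsto (fun t => ‖gradient u (γ t)‖) atTop (𝓝 ‖gradient u z‖) :=
    ((hgradc.continuousAt (hUo.mem_nhds hzU)).tendsto.comp hmain.1).norm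
  have hp := norm_pos_iff.2 hgz
  have hev : ∀ᶠ t in atTop, ‖gradient u z‖ / 2 < ‖gradient u (γ t)‖ :=
    hlim.eventually (lt_mem_nhds (half_lt_self hp))
  obtain ⟨a, ha⟩ := eventually_atTop.1 (hev.and (eventually_ge_atTop (0:ℝ)))
  have h1 : IntegrableOn (fun _ : ℝ => ‖gradient u z‖ / 2) (Ici a) := by
    refine Integrable.mono' (hmain.2.mono_set (Ici_subset_Ici.2 (ha a le_rfl).2))
      aestronglyMeasurable_const ?_
    refine (ae_restrict_iff' measurableSet_Ici).2 (Eventually.of_forall fun t ht => ?_)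
    rw [Real.norm_eq_abs, abs_of_pos (by positivity)]
    exact (ha t ht).1.le
  rw [integrableOn_const_iff] at h1
  simp [hgz] at h1
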